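/- arXiv:1507.02901 — 2 statements merged into one kernel-verified Lean document; each statement's English description precedes it below -/
import Mathlib

section
/- Let N be a normal bounded operator on a complex Hilbert space E and T a pure quasinormal bounded operator on a complex Hilbert space H, such that the direct sum R = N⊕T on the Hilbert space direct sum E⊕H is injective. Then σ_ext(N⊕T) = σ_ext(N) ∪ σ_ext(T) ∪ Λ_int(N,T). -/
open ContinuousLinearMap

noncomputable section

/-- The modulus `|T| = (T*T)^(1/2)` of a bounded operator on a complex Hilbert space. -/
def modulus {H : Type*} [NormedAddCommGroup H] [InnerProductSpace ℂ H] [CompleteSpace H]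
    (T : H →L[ℂ] H) : H →L[ℂ] H :=
  CFC.sqrt (adjoint T ∘L T)

/-- A bounded operator is quasinormal if it commutes with its modulus. -/
def IsQuasinormal {H : Type*} [NormedAddCommGroup H] [InnerProductSpace ℂ H] [CompleteSpace H]
    (T : H →L[ℂ] H) : Prop :=
  T ∘L modulus T = modulus T ∘L T

/-- `m_T = inf {⟨Tx,x⟩ : ‖x‖ = 1}` (real part of the inner product). -/
def mval {H : Type*} [NormedAddCommGroup H] [InnerProductSpace ℂ H]
    (T : H →L[ℂ] H) : ℝ :=
  sInf {r : ℝ | ∃ x : H, ‖x‖ = 1 ∧ r = T.reApplyInnerSelf x}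

/-- The set of intertwining values `Λ_int(R,M)`. -/
def intertwiningValues {H K : Type*} [NormedAddCommGroup H] [InnerProductSpace ℂ H]
    [NormedAddCommGroup K] [InnerProductSpace ℂ K]
    (R : H →L[ℂ] H) (M : K →L[ℂ] K) : Set ℂ :=
  {l : ℂ | ∃ X : K →L[ℂ] H, X ≠ 0 ∧ R ∘L X = l • (X ∘L M)}

/-- The set of extended eigenvalues `σ_ext(T)`. -/
def extSpectrum {H : Type*} [NormedAddCommGroup H] [InnerProductSpace ℂ H]
    (T : H →L[ℂ] H) : Set ℂ :=
  {l : ℂ | ∃ X : H →L[ℂ] H, X ≠ 0 ∧ T ∘L X = l • (X ∘L T)}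

/-- The set `𝒜_r(R,A)` of operators `L` with `‖Rⁿ(Lx)‖ ≤ c·rⁿ·‖Aⁿx‖` for all `n, x`. -/
def calA {H 𝔏 : Type*} [NormedAddCommGroup H] [InnerProductSpace ℂ H]
    [NormedAddCommGroup 𝔏] [InnerProductSpace ℂ 𝔏]
    (r : ℝ) (R : H →L[ℂ] H) (A : 𝔏 →L[ℂ] 𝔏) : Set (𝔏 →L[ℂ] H) :=
  {L : 𝔏 →L[ℂ] H | ∃ c : ℝ, 0 ≤ c ∧
    ∀ (n : ℕ) (x : 𝔏), ‖(R ^ n) (L x)‖ ≤ c * r ^ n * ‖(A ^ n) x‖}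

/-- An operator is pure if it has no nonzero reducing subspace on which it is normal. -/
def IsPure {H : Type*} [NormedAddCommGroup H] [InnerProductSpace ℂ H] [CompleteSpace H]
    (T : H →L[ℂ] H) : Prop :=
  ∀ M : Submodule ℂ H, IsClosed (M : Set H) → (∀ x ∈ M, T x ∈ M) →
    (∀ x ∈ M, adjoint T x ∈ M) →
    (∀ x ∈ M, T (adjoint T x) = adjoint T (T x)) → M = ⊥

universe u

/-- An operator is subnormal if it has a normal extension on a larger Hilbert space. -/
def IsSubnormal {F : Type*} [NormedAddCommGroup F] [InnerProductSpace ℂ F] [CompleteSpace F]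
    (T : F →L[ℂ] F) : Prop :=
  ∃ (K : Type u) (_ : NormedAddCommGroup K) (_ : InnerProductSpace ℂ K) (_ : CompleteSpace K)
    (j : F →ₗᵢ[ℂ] K) (M : K →L[ℂ] K),
      adjoint M ∘L M = M ∘L adjoint M ∧ ∀ x : F, M (j x) = j (T x)

end

/-!
In `2 × 2` block form an intertwiner of two direct sums is a matrix of four intertwiners of the
summands, so `σ_ext(N ⊕ T)` is always the union of `σ_ext(N)`, `σ_ext(T)`, `Λ_int(N, T)` and
`Λ_int(T, N)`. The last set is empty when `N` is normal and `T` is pure and subnormal: if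
`T C = C (λ N)`, the Fuglede–Putnam theorem applied to a normal extension of `T` also gives
`T* C = C (λ N)*`, so the closure of the range of `C` reduces `T` to a normal operator and
purity forces `C = 0`. A quasinormal `T` is subnormal because
`[T, D^(1/2); 0, T*]` with `D = T*T - TT*` is a normal extension of it.
-/

section BlockOperator

variable {𝕜 E F G H E' F' : Type*} [RCLike 𝕜]
  [NormedAddCommGroup E] [InnerProductSpace 𝕜 E] [NormedAddCommGroup F] [InnerProductSpace 𝕜 F]
  [NormedAddCommGroup G] [InnerProductSpace 𝕜 G] [NormedAddCommGroup H] [InnerProductSpace 𝕜 H]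
  [NormedAddCommGroup E'] [InnerProductSpace 𝕜 E'] [NormedAddCommGroup F'] [InnerProductSpace 𝕜 F']

/-- The operator between Hilbert space direct sums with block matrix `[A, B; C, D]`, in row-major
order: `(x, y) ↦ (A x + B y, C x + D y)`. -/
noncomputable def blockOperator (A : E →L[𝕜] G) (B : F →L[𝕜] G) (C : E →L[𝕜] H) (D : F →L[𝕜] H) :
    WithLp 2 (E × F) →L[𝕜] WithLp 2 (G × H) :=
  (WithLp.prodContinuousLinearEquiv 2 𝕜 G H).symm ∘L
    (A.coprod B).prod (C.coprod D) ∘L WithLp.prodContinuousLinearEquiv 2 𝕜 E F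

@[simp]
lemma blockOperator_apply (A : E →L[𝕜] G) (B : F →L[𝕜] G) (C : E →L[𝕜] H) (D : F →L[𝕜] H)
    (w : WithLp 2 (E × F)) :
    blockOperator A B C D w = WithLp.toLp 2 (A w.fst + B w.snd, C w.fst + D w.snd) :=
  rfl

lemma blockOperator_inj {A A' : E →L[𝕜] G} {B B' : F →L[𝕜] G} {C C' : E →L[𝕜] H}
    {D D' : F →L[𝕜] H} :
    blockOperator A B C D = blockOperator A' B' C' D' ↔
      (A = A' ∧ B = B') ∧ C = C' ∧ D = D' := by
  refine ⟨fun h => ?_, by rintro ⟨⟨rfl, rfl⟩, rfl, rfl⟩; rfl⟩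
  have on_fst (x : E) : A x = A' x ∧ C x = C' x := by
    simpa using DFunLike.congr_fun h (WithLp.toLp 2 (x, 0))
  have on_snd (y : F) : B y = B' y ∧ D y = D' y := by
    simpa using DFunLike.congr_fun h (WithLp.toLp 2 (0, y))
  exact ⟨⟨ContinuousLinearMap.ext fun x => (on_fst x).1,
    ContinuousLinearMap.ext fun y => (on_snd y).1⟩,
    ContinuousLinearMap.ext fun x => (on_fst x).2, ContinuousLinearMap.ext fun y => (on_snd y).2⟩

lemma exists_eq_blockOperator (X : WithLp 2 (E × F) →L[𝕜] WithLp 2 (G × H)) :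
    ∃ A B C D, X = blockOperator A B C D := by
  let inE : E →L[𝕜] WithLp 2 (E × F) :=
      (WithLp.prodContinuousLinearEquiv 2 𝕜 E F).symm ∘L inl 𝕜 E F
  let inF : F →L[𝕜] WithLp 2 (E × F) :=
      (WithLp.prodContinuousLinearEquiv 2 𝕜 E F).symm ∘L inr 𝕜 E F
  refine ⟨WithLp.fstL 2 𝕜 G H ∘L X ∘L inE, WithLp.fstL 2 𝕜 G H ∘L X ∘L inF,
    WithLp.sndL 2 𝕜 G H ∘L X ∘L inE, WithLp.sndL 2 𝕜 G H ∘L X ∘L inF, ?_⟩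
  ext1 w
  have decomp : w = inE w.fst + inF w.snd := by
    apply WithLp.ofLp_injective 2
    ext <;> simp [inE, inF]
  conv_lhs => rw [decomp, map_add]
  rfl

@[simp]
lemma blockOperator_eq_zero_iff {A : E →L[𝕜] G} {B : F →L[𝕜] G} {C : E →L[𝕜] H}
    {D : F →L[𝕜] H} :
    blockOperator A B C D = 0 ↔ (A = 0 ∧ B = 0) ∧ C = 0 ∧ D = 0 := by
  have block_zero : blockOperator (0 : E →L[𝕜] G) (0 : F →L[𝕜] G) (0 : E →L[𝕜] H) 0 = 0 := by
    ext1 w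
    simp
  rw [← block_zero, blockOperator_inj]

lemma smul_blockOperator (c : 𝕜) (A : E →L[𝕜] G) (B : F →L[𝕜] G) (C : E →L[𝕜] H)
    (D : F →L[𝕜] H) :
    c • blockOperator A B C D = blockOperator (c • A) (c • B) (c • C) (c • D) := by
  ext1 w
  simp [← WithLp.toLp_smul]

lemma blockOperator_comp (A' : G →L[𝕜] E') (B' : H →L[𝕜] E') (C' : G →L[𝕜] F') (D' : H →L[𝕜] F')
    (A : E →L[𝕜] G) (B : F →L[𝕜] G) (C : E →L[𝕜] H) (D : F →L[𝕜] H) :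
    blockOperator A' B' C' D' ∘L blockOperator A B C D =
      blockOperator (A' ∘L A + B' ∘L C) (A' ∘L B + B' ∘L D)
        (C' ∘L A + D' ∘L C) (C' ∘L B + D' ∘L D) := by
  ext1 w
  simp [add_add_add_comm]

variable [CompleteSpace E] [CompleteSpace F] [CompleteSpace G] [CompleteSpace H]

lemma adjoint_blockOperator (A : E →L[𝕜] G) (B : F →L[𝕜] G) (C : E →L[𝕜] H) (D : F →L[𝕜] H) :
    adjoint (blockOperator A B C D) =
      blockOperator (adjoint A) (adjoint C) (adjoint B) (adjoint D) := by
  symm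
  rw [eq_adjoint_iff]
  intro v w
  simp [inner_add_left, inner_add_right, adjoint_inner_left, add_add_add_comm]

end BlockOperator

/-- The self-commutator `[t*, t] = t*t - tt*`, which vanishes exactly when `t` is normal and is
positive exactly when `t` is hyponormal. -/
def selfCommutator {A : Type*} [NonUnitalNonAssocRing A] [Star A] (t : A) : A :=
  star t * t - t * star t

lemma selfCommutator_mul_self {A : Type*} [NonUnitalRing A] [Star A] {t : A}
    (ht : Commute t (star t * t)) : selfCommutator t * t = 0 := by
  rw [selfCommutator, sub_mul, ← ht.eq, mul_assoc, sub_self]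

section CStarAlgebra

variable {A : Type*} [CStarAlgebra A] [PartialOrder A] [StarOrderedRing A]

lemma nonneg_of_odd_pow_nonneg {a : A} (ha : IsSelfAdjoint a) {n : ℕ} (hn : Odd n)
    (h : 0 ≤ a ^ n) : 0 ≤ a := by
  rw [StarOrderedRing.nonneg_iff_spectrum_nonneg (R := ℝ) a ha]
  intro x hx
  exact hn.pow_nonneg_iff.1 <|
    (StarOrderedRing.nonneg_iff_spectrum_nonneg (R := ℝ) (a ^ n) (ha.pow n)).1 h (x ^ n)
      (spectrum.pow_mem_pow a n hx)

lemma selfCommutator_nonneg {t : A} (ht : Commute t (star t * t)) : 0 ≤ selfCommutator t := by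
  set d := selfCommutator t
  have d_selfAdjoint : IsSelfAdjoint d :=
    (IsSelfAdjoint.star_mul_self t).sub (IsSelfAdjoint.mul_star_self t)
  have d_mul : d * (t * star t) = 0 := by rw [← mul_assoc, selfCommutator_mul_self ht, zero_mul]
  have d_cubed : d ^ 3 = d * (star t * t) * d :=
    calc d ^ 3 = d * (star t * t - t * star t) * d := pow_three' d
      _ = d * (star t * t) * d := by rw [mul_sub, d_mul, sub_zero]
  refine nonneg_of_odd_pow_nonneg d_selfAdjoint (n := 3) (by decide) ?_
  rw [d_cubed]
  exact d_selfAdjoint.conjugate_nonneg (star_mul_self_nonneg t)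

lemma sqrt_mul_eq_zero {a b : A} (ha : 0 ≤ a) (hab : a * b = 0) : CFC.sqrt a * b = 0 := by
  rw [← CStarRing.star_mul_self_eq_zero_iff, star_mul,
    (CFC.sqrt_nonneg a).isSelfAdjoint.star_eq, mul_assoc, ← mul_assoc (CFC.sqrt a),
    CFC.sqrt_mul_sqrt_self a ha, hab, mul_zero]

end CStarAlgebra

section Operators

variable {E H : Type*} [NormedAddCommGroup E] [InnerProductSpace ℂ E] [CompleteSpace E]
  [NormedAddCommGroup H] [InnerProductSpace ℂ H] [CompleteSpace H]

lemma adjoint_comp_eq_of_isStarNormal {M : H →L[ℂ] H} {N : E →L[ℂ] E} {C : E →L[ℂ] H}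
    (hM : IsStarNormal M) (hN : IsStarNormal N) (h : M ∘L C = C ∘L N) :
    adjoint M ∘L C = C ∘L adjoint N := by
  have sum_normal : IsStarNormal (blockOperator N 0 0 M) := by
    refine ⟨?_⟩
    have hN' : adjoint N ∘L N = N ∘L adjoint N := hN.star_comm_self
    have hM' : adjoint M ∘L M = M ∘L adjoint M := hM.star_comm_self
    change adjoint (blockOperator N 0 0 M) ∘L _ = _ ∘L adjoint (blockOperator N 0 0 M)
    simp [adjoint_blockOperator, blockOperator_comp, hN', hM']
  have commutes : Commute (blockOperator N 0 0 M) (blockOperator 0 0 C 0) := by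
    change blockOperator N 0 0 M ∘L _ = _ ∘L blockOperator N 0 0 M
    simp [blockOperator_comp, h]
  have star_commutes : adjoint (blockOperator N 0 0 M) ∘L blockOperator 0 0 C 0 =
      blockOperator 0 0 C 0 ∘L adjoint (blockOperator N 0 0 M) :=
    sum_normal.commute_star_left commutes
  simpa [adjoint_blockOperator, blockOperator_comp, blockOperator_inj] using star_commutes

lemma IsSubnormal.adjoint_comp_eq {T : H →L[ℂ] H} {N : E →L[ℂ] E} {C : E →L[ℂ] H}
    (hT : IsSubnormal T) (hN : IsStarNormal N) (h : T ∘L C = C ∘L N) :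
    adjoint T ∘L C = C ∘L adjoint N := by
  obtain ⟨K, _, _, _, j, M, hM, extends_T⟩ := hT
  set J := j.toContinuousLinearMap
  have JJ : adjoint J ∘L J = .id ℂ H := (norm_map_iff_adjoint_comp_self J).1 j.norm_map
  have MJ : M ∘L J = J ∘L T := ContinuousLinearMap.ext extends_T
  have lifted : adjoint M ∘L (J ∘L C) = (J ∘L C) ∘L adjoint N := by
    apply adjoint_comp_eq_of_isStarNormal ⟨hM⟩ hN
    rw [← comp_assoc, MJ, comp_assoc, h, comp_assoc]
  calc adjoint T ∘L C = (adjoint T ∘L (adjoint J ∘L J)) ∘L C := by rw [JJ, comp_id]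
    _ = adjoint (J ∘L T) ∘L J ∘L C := by rw [adjoint_comp]; rfl
    _ = adjoint J ∘L adjoint M ∘L J ∘L C := by rw [← MJ, adjoint_comp]; rfl
    _ = (adjoint J ∘L J) ∘L C ∘L adjoint N := by rw [lifted]; rfl
    _ = C ∘L adjoint N := by rw [JJ, id_comp]

lemma IsPure.eq_zero_of_comp_eq {T : H →L[ℂ] H} {N : E →L[ℂ] E} {C : E →L[ℂ] H}
    (hT : IsPure T) (hN : IsStarNormal N) (h : T ∘L C = C ∘L N)
    (h_adjoint : adjoint T ∘L C = C ∘L adjoint N) : C = 0 := by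
  have TC (x : E) : T (C x) = C (N x) := DFunLike.congr_fun h x
  have TadjC (x : E) : adjoint T (C x) = C (adjoint N x) := DFunLike.congr_fun h_adjoint x
  have closure_invariant (S : H →L[ℂ] H) (hS : ∀ x, S (C x) ∈ C.range) :
      ∀ y ∈ C.range.topologicalClosure, S y ∈ C.range.topologicalClosure := fun y hy =>
    map_mem_closure S.continuous hy (by rintro _ ⟨x, rfl⟩; exact hS x)
  have normal_on_closure : ∀ y ∈ C.range.topologicalClosure,
      T (adjoint T y) = adjoint T (T y) := by
    have normal_locus_closed : IsClosed {y | T (adjoint T y) = adjoint T (T y)} :=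
      isClosed_eq (by fun_prop) (by fun_prop)
    refine closure_minimal ?_ normal_locus_closed
    rintro _ ⟨x, rfl⟩
    change T (adjoint T (C x)) = adjoint T (T (C x))
    have hNx : adjoint N (N x) = N (adjoint N x) := DFunLike.congr_fun hN.star_comm_self.eq x
    rw [TadjC, TC, TC, TadjC, hNx]
  have closure_eq_bot := hT _ C.range.isClosed_topologicalClosure
    (closure_invariant T fun x => ⟨N x, (TC x).symm⟩)
    (closure_invariant (adjoint T) fun x => ⟨adjoint N x, (TadjC x).symm⟩) normal_on_closure
  have range_eq_bot : C.range = ⊥ :=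
    eq_bot_iff.2 (closure_eq_bot ▸ C.range.le_topologicalClosure)
  exact ContinuousLinearMap.coe_injective (LinearMap.range_eq_bot.1 range_eq_bot)

lemma intertwiningValues_eq_empty {T : H →L[ℂ] H} {N : E →L[ℂ] E} (hT : IsSubnormal T)
    (hTpure : IsPure T) (hN : IsStarNormal N) : intertwiningValues T N = ∅ := by
  refine Set.eq_empty_of_forall_notMem ?_
  rintro l ⟨C, hC, h⟩
  have h' : T ∘L C = C ∘L (l • N) := by rw [h, comp_smul]
  have hlN : IsStarNormal (l • N) := inferInstance
  exact hC (hTpure.eq_zero_of_comp_eq hlN h' (hT.adjoint_comp_eq hlN h'))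

lemma IsQuasinormal.commute_star_mul_self {T : H →L[ℂ] H} (hT : IsQuasinormal T) :
    Commute T (star T * T) := by
  have modulus_sq : modulus T * modulus T = star T * T :=
    CFC.sqrt_mul_sqrt_self _ (star_mul_self_nonneg T)
  have hT : Commute T (modulus T) := hT
  exact modulus_sq ▸ hT.mul_right hT

end Operators

lemma IsQuasinormal.isSubnormal {H : Type u} [NormedAddCommGroup H] [InnerProductSpace ℂ H]
    [CompleteSpace H] {T : H →L[ℂ] H} (hT : IsQuasinormal T) : IsSubnormal.{u, u} T := by
  have commutes := hT.commute_star_mul_self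
  have d_nonneg := selfCommutator_nonneg commutes
  set x := CFC.sqrt (selfCommutator T)
  have x_star : adjoint x = x := (CFC.sqrt_nonneg _).isSelfAdjoint.star_eq
  have xx : x ∘L x = adjoint T ∘L T - T ∘L adjoint T := CFC.sqrt_mul_sqrt_self _ d_nonneg
  have xT : x ∘L T = 0 := sqrt_mul_eq_zero d_nonneg (selfCommutator_mul_self commutes)
  have Tx : adjoint T ∘L x = 0 := by
    simpa only [adjoint_comp, x_star, map_zero] using congrArg adjoint xT
  let j : H →ₗᵢ[ℂ] WithLp 2 (H × H) :=
    { (WithLp.linearEquiv 2 ℂ (H × H)).symm.toLinearMap ∘ₗ LinearMap.inl ℂ H H with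
      norm_map' := by simp }
  refine ⟨WithLp 2 (H × H), inferInstance, inferInstance, inferInstance, j,
    blockOperator T x 0 (adjoint T), ?_, fun y => ?_⟩
  · simp [adjoint_blockOperator, blockOperator_comp, x_star, xx, xT, Tx]
  · simp [j]

lemma extSpectrum_eq_intertwiningValues {H : Type*} [NormedAddCommGroup H]
    [InnerProductSpace ℂ H] (T : H →L[ℂ] H) : extSpectrum T = intertwiningValues T T :=
  rfl

lemma eq_zero_of_notMem_intertwiningValues {H K : Type*} [NormedAddCommGroup H]
    [InnerProductSpace ℂ H] [NormedAddCommGroup K] [InnerProductSpace ℂ K] {R : H →L[ℂ] H}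
    {M : K →L[ℂ] K} {l : ℂ} {X : K →L[ℂ] H} (hl : l ∉ intertwiningValues R M)
    (h : R ∘L X = l • (X ∘L M)) : X = 0 := by
  by_contra hX
  exact hl ⟨X, hX, h⟩

lemma intertwiningValues_blockOperator_diagonal {E F G H : Type*}
    [NormedAddCommGroup E] [InnerProductSpace ℂ E] [NormedAddCommGroup F] [InnerProductSpace ℂ F]
    [NormedAddCommGroup G] [InnerProductSpace ℂ G] [NormedAddCommGroup H] [InnerProductSpace ℂ H]
    (A : G →L[ℂ] G) (B : H →L[ℂ] H) (A' : E →L[ℂ] E) (B' : F →L[ℂ] F) :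
    intertwiningValues (blockOperator A 0 0 B) (blockOperator A' 0 0 B') =
      intertwiningValues A A' ∪ intertwiningValues A B' ∪
        (intertwiningValues B A' ∪ intertwiningValues B B') := by
  have intertwines_iff (l : ℂ) (P : E →L[ℂ] G) (Q : F →L[ℂ] G) (S : E →L[ℂ] H) (U : F →L[ℂ] H) :
      blockOperator A 0 0 B ∘L blockOperator P Q S U =
          l • (blockOperator P Q S U ∘L blockOperator A' 0 0 B') ↔
        (A ∘L P = l • (P ∘L A') ∧ A ∘L Q = l • (Q ∘L B')) ∧
          B ∘L S = l • (S ∘L A') ∧ B ∘L U = l • (U ∘L B') := by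
    simp [blockOperator_comp, smul_blockOperator, blockOperator_inj]
  ext l
  constructor
  · rintro ⟨X, hX, h⟩
    obtain ⟨P, Q, S, U, rfl⟩ := exists_eq_blockOperator X
    obtain ⟨⟨hP, hQ⟩, hS, hU⟩ := (intertwines_iff l P Q S U).1 h
    by_contra hl
    simp only [Set.mem_union, not_or] at hl
    obtain ⟨⟨hAA', hAB'⟩, hBA', hBB'⟩ := hl
    refine hX (blockOperator_eq_zero_iff.2 ⟨⟨?_, ?_⟩, ?_, ?_⟩)
    · exact eq_zero_of_notMem_intertwiningValues hAA' hP
    · exact eq_zero_of_notMem_intertwiningValues hAB' hQ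
    · exact eq_zero_of_notMem_intertwiningValues hBA' hS
    · exact eq_zero_of_notMem_intertwiningValues hBB' hU
  · rintro ((⟨X, hX, h⟩ | ⟨X, hX, h⟩) | ⟨X, hX, h⟩ | ⟨X, hX, h⟩)
    · exact ⟨blockOperator X 0 0 0, by simp [hX], (intertwines_iff ..).2 (by simp [h])⟩
    · exact ⟨blockOperator 0 X 0 0, by simp [hX], (intertwines_iff ..).2 (by simp [h])⟩
    · exact ⟨blockOperator 0 0 X 0, by simp [hX], (intertwines_iff ..).2 (by simp [h])⟩
    · exact ⟨blockOperator 0 0 0 X, by simp [hX], (intertwines_iff ..).2 (by simp [h])⟩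

theorem extSpectrum_direct_sum_general
    {E H : Type*} [NormedAddCommGroup E] [InnerProductSpace ℂ E] [CompleteSpace E]
    [NormedAddCommGroup H] [InnerProductSpace ℂ H] [CompleteSpace H]
    (N : E →L[ℂ] E) (hN : adjoint N ∘L N = N ∘L adjoint N)
    (T : H →L[ℂ] H) (hTsub : IsSubnormal T) (hTpure : IsPure T)
    (R : WithLp 2 (E × H) →L[ℂ] WithLp 2 (E × H))
    (hR : ∀ (x : E) (y : H),
      R ((WithLp.equiv 2 (E × H)).symm (x, y)) = (WithLp.equiv 2 (E × H)).symm (N x, T y)) :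
    extSpectrum R = extSpectrum N ∪ extSpectrum T ∪ intertwiningValues N T := by
  have R_eq : R = blockOperator N 0 0 T := by
    ext1 w
    exact (hR w.fst w.snd).trans (by simp)
  have no_lower_left : intertwiningValues T N = ∅ := intertwiningValues_eq_empty hTsub hTpure ⟨hN⟩
  simp only [extSpectrum_eq_intertwiningValues, R_eq, intertwiningValues_blockOperator_diagonal,
    no_lower_left, Set.empty_union]
  exact Set.union_right_comm _ _ _

theorem extSpectrum_direct_sum
    {E H : Type*} [NormedAddCommGroup E] [InnerProductSpace ℂ E] [CompleteSpace E] [NormedAddCommGroup H] [InnerProductSpace ℂ H] [CompleteSpace H]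
    (N : E →L[ℂ] E) (hN : adjoint N ∘L N = N ∘L adjoint N)
    (T : H →L[ℂ] H) (hTqn : IsQuasinormal T) (hTpure : IsPure T)
    (R : WithLp 2 (E × H) →L[ℂ] WithLp 2 (E × H))
    (hR : ∀ (x : E) (y : H),
      R ((WithLp.equiv 2 (E × H)).symm (x, y)) = (WithLp.equiv 2 (E × H)).symm (N x, T y))
    (hRinj : Function.Injective R) :
    extSpectrum R = extSpectrum N ∪ extSpectrum T ∪ intertwiningValues N T :=
  extSpectrum_direct_sum_general N hN T hTqn.isSubnormal hTpure R hR
end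

section
/- For i = 1,2, let T_i be an injective quasinormal bounded operator on a complex Hilbert space H_i, with polar decomposition T_i = V_i∘|T_i| where V_i is a linear isometry of H_i. For i = 1,2 let K_i be a complex Hilbert space, ι_i : H_i → K_i a linear isometry and N_i a normal bounded operator on K_i with N_i∘ι_i = ι_i∘T_i, and suppose each N_i is a minimal normal extension: the only closed subspace of K_i that is invariant under both N_i and N_i* and contains the range of ι_i is K_i itself. Then for a bounded operator X : H₂ → H₁ the following are equivalent: (1) there exists a bounded operator X̂ : K₂ → K₁ with X̂∘ι₂ = ι₁∘X and N₁∘X̂ = X̂∘N₂; (2) V₁∘X = X∘V₂ and |T₁|∘X = X∘|T₂|. -/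
open ContinuousLinearMap

/-!
If `Xhat` lifts `X`, the Fuglede–Putnam theorem makes `Xhat` intertwine `N₂*N₂` with `N₁*N₁`.
Compressing to `H₁` gives `T₁*T₁ X = X T₂*T₂`, because `N₂*N₂` extends `T₂*T₂` for quasinormal `T₂`.
Square roots then yield `|T₁| X = X |T₂|`, and `V₁ X = X V₂` follows on the dense range of `|T₂|`.

Conversely, `Xhat` has to send `∑ N₂*ᵏ ι₂ fₖ` to `∑ N₁*ᵏ ι₁ X fₖ`, and it must be shown that this is
bounded. For `n` at least every index, `‖∑ N₂*ᵏ ι₂ fₖ‖ = ‖∑ V₂ⁿ⁻ᵏ |T₂|ᵏ fₖ‖`, and the intertwining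
relations give `‖∑ N₁*ᵏ ι₁ X fₖ‖ = ‖X ∑ V₂ⁿ⁻ᵏ |T₂|ᵏ fₖ‖`; so `‖X‖` is a bound.
-/

section BlockOperators

variable {𝕜 H K : Type*} [RCLike 𝕜]
  [NormedAddCommGroup H] [InnerProductSpace 𝕜 H] [NormedAddCommGroup K] [InnerProductSpace 𝕜 K]

/-- The diagonal block operator `A ⊕ B` on the Hilbert sum `H ⊕ K`. -/
def blockDiagonal (A : H →L[𝕜] H) (B : K →L[𝕜] K) : WithLp 2 (H × K) →L[𝕜] WithLp 2 (H × K) :=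
  (WithLp.prodContinuousLinearEquiv 2 𝕜 H K).symm ∘L (A.prodMap B) ∘L
    WithLp.prodContinuousLinearEquiv 2 𝕜 H K

/-- The operator on the Hilbert sum `H ⊕ K` whose only nonzero block is `X`, from `K` to `H`. It
turns an intertwiner of two operators into an element of the commutant of their direct sum. -/
def blockUpperRight (X : K →L[𝕜] H) : WithLp 2 (H × K) →L[𝕜] WithLp 2 (H × K) :=
  (WithLp.prodContinuousLinearEquiv 2 𝕜 H K).symm ∘L (inl 𝕜 H K) ∘L X ∘L WithLp.sndL 2 𝕜 H K

theorem blockDiagonal_apply (A : H →L[𝕜] H) (B : K →L[𝕜] K) (z : WithLp 2 (H × K)) :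
    blockDiagonal A B z = WithLp.toLp 2 (A z.fst, B z.snd) :=
  rfl

theorem blockUpperRight_apply (X : K →L[𝕜] H) (z : WithLp 2 (H × K)) :
    blockUpperRight X z = WithLp.toLp 2 (X z.snd, 0) :=
  rfl

theorem blockDiagonal_mul (A C : H →L[𝕜] H) (B D : K →L[𝕜] K) :
    blockDiagonal A B * blockDiagonal C D = blockDiagonal (A * C) (B * D) :=
  rfl

theorem commute_blockDiagonal_blockUpperRight_iff {A : H →L[𝕜] H} {B : K →L[𝕜] K}
    {X : K →L[𝕜] H} : Commute (blockDiagonal A B) (blockUpperRight X) ↔ A ∘L X = X ∘L B := by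
  constructor
  · intro h
    ext y
    simpa [blockDiagonal_apply, blockUpperRight_apply] using
      congrArg WithLp.fst (DFunLike.congr_fun h.eq (WithLp.toLp 2 (0, y)))
  · intro h
    ext1 z
    simp [blockDiagonal_apply, blockUpperRight_apply, show A (X z.snd) = X (B z.snd) from
      DFunLike.congr_fun h z.snd]

variable [CompleteSpace H] [CompleteSpace K]

theorem star_blockDiagonal (A : H →L[𝕜] H) (B : K →L[𝕜] K) :
    star (blockDiagonal A B) = blockDiagonal (star A) (star B) := by
  symm
  rw [star_eq_adjoint (blockDiagonal A B), eq_adjoint_iff]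
  intro x y
  simp [blockDiagonal_apply, star_eq_adjoint, adjoint_inner_left]

theorem isStarNormal_blockDiagonal {A : H →L[𝕜] H} {B : K →L[𝕜] K} (hA : IsStarNormal A)
    (hB : IsStarNormal B) : IsStarNormal (blockDiagonal A B) := by
  constructor
  rw [commute_iff_eq, star_blockDiagonal, blockDiagonal_mul, blockDiagonal_mul,
    hA.star_comm_self.eq, hB.star_comm_self.eq]

theorem blockDiagonal_nonneg {A : H →L[𝕜] H} {B : K →L[𝕜] K} (hA : 0 ≤ A) (hB : 0 ≤ B) :
    0 ≤ blockDiagonal A B := by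
  rw [nonneg_iff_isPositive] at hA hB ⊢
  refine isPositive_def'.2 ⟨?_, fun z => ?_⟩
  · rw [IsSelfAdjoint, star_blockDiagonal, hA.isSelfAdjoint.star_eq, hB.isSelfAdjoint.star_eq]
  · simpa [reApplyInnerSelf_apply, blockDiagonal_apply] using
      add_nonneg (hA.re_inner_nonneg_left z.fst) (hB.re_inner_nonneg_left z.snd)

end BlockOperators

section Intertwiners

variable {H K : Type*} [NormedAddCommGroup H] [InnerProductSpace ℂ H] [CompleteSpace H]
  [NormedAddCommGroup K] [InnerProductSpace ℂ K] [CompleteSpace K]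

theorem commute_of_commute_mul_self {A X : H →L[ℂ] H} (hA : 0 ≤ A) (h : Commute (A * A) X) :
    Commute A X := by
  rw [← CFC.sqrt_mul_self A]
  exact h.cfcₙ_nnreal _

/-- The **Fuglede–Putnam theorem**. -/
theorem adjoint_comp_eq_comp_adjoint {A : H →L[ℂ] H} {B : K →L[ℂ] K} (hA : IsStarNormal A)
    (hB : IsStarNormal B) {X : K →L[ℂ] H} (h : A ∘L X = X ∘L B) :
    adjoint A ∘L X = X ∘L adjoint B := by
  rw [← commute_blockDiagonal_blockUpperRight_iff] at h ⊢
  rw [← star_eq_adjoint, ← star_eq_adjoint, ← star_blockDiagonal]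
  exact (isStarNormal_blockDiagonal hA hB).commute_star_left h

theorem comp_eq_comp_of_nonneg {A : H →L[ℂ] H} {B : K →L[ℂ] K} (hA : 0 ≤ A) (hB : 0 ≤ B)
    {X : K →L[ℂ] H} (h : (A ∘L A) ∘L X = X ∘L (B ∘L B)) : A ∘L X = X ∘L B := by
  have hsq : Commute (blockDiagonal A B * blockDiagonal A B) (blockUpperRight X) := by
    rw [blockDiagonal_mul]
    exact commute_blockDiagonal_blockUpperRight_iff.2 h
  exact commute_blockDiagonal_blockUpperRight_iff.1
    (commute_of_commute_mul_self (blockDiagonal_nonneg hA hB) hsq)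

end Intertwiners

section Modulus

variable {H K : Type*} [NormedAddCommGroup H] [InnerProductSpace ℂ H] [CompleteSpace H]
  [NormedAddCommGroup K] [InnerProductSpace ℂ K] [CompleteSpace K]

theorem isSelfAdjoint_modulus (T : H →L[ℂ] H) : IsSelfAdjoint (modulus T) :=
  (CFC.abs_nonneg T).isSelfAdjoint

theorem modulus_comp_modulus (T : H →L[ℂ] H) : modulus T ∘L modulus T = adjoint T ∘L T :=
  CFC.abs_mul_abs T

theorem modulus_comp_eq_comp_modulus {S : H →L[ℂ] H} {T : K →L[ℂ] K} {X : K →L[ℂ] H}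
    (h : (adjoint S ∘L S) ∘L X = X ∘L (adjoint T ∘L T)) : modulus S ∘L X = X ∘L modulus T := by
  rw [← modulus_comp_modulus, ← modulus_comp_modulus] at h
  exact comp_eq_comp_of_nonneg (CFC.abs_nonneg S) (CFC.abs_nonneg T) h

theorem norm_modulus_apply (T : H →L[ℂ] H) (x : H) : ‖modulus T x‖ = ‖T x‖ := by
  rw [apply_norm_eq_sqrt_inner_adjoint_left, apply_norm_eq_sqrt_inner_adjoint_left T,
    (isSelfAdjoint_modulus T).adjoint_eq, modulus_comp_modulus]

theorem injective_modulus {T : H →L[ℂ] H} (hT : Function.Injective T) :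
    Function.Injective (modulus T) := by
  refine (injective_iff_map_eq_zero _).2 fun x hx => (injective_iff_map_eq_zero T).1 hT x ?_
  rw [← norm_eq_zero, ← norm_modulus_apply, hx, norm_zero]

theorem denseRange_modulus {T : H →L[ℂ] H} (hT : Function.Injective T) :
    DenseRange (modulus T) := by
  have hker : (modulus T).ker = ⊥ := LinearMap.ker_eq_bot.2 (injective_modulus hT)
  have hclosure : (modulus T).range.topologicalClosure = ⊤ := by
    rw [Submodule.topologicalClosure_eq_top_iff,
      (isSelfAdjoint_modulus T).isStarNormal.orthogonal_range, hker]
  exact Submodule.dense_iff_topologicalClosure_eq_top.2 hclosure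

namespace IsQuasinormal

variable {T : H →L[ℂ] H}

theorem norm_adjoint_apply_apply (hT : IsQuasinormal T) (x : H) :
    ‖adjoint T (T x)‖ = ‖T (T x)‖ := calc
  ‖adjoint T (T x)‖ = ‖modulus T (modulus T x)‖ := by rw [← comp_apply, ← modulus_comp_modulus]; rfl
  _ = ‖T (modulus T x)‖ := norm_modulus_apply T _
  _ = ‖modulus T (T x)‖ := congrArg norm (DFunLike.congr_fun hT x)
  _ = ‖T (T x)‖ := norm_modulus_apply T _

theorem commute_isometry_modulus (hT : IsQuasinormal T) (hinj : Function.Injective T)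
    {V : H →ₗᵢ[ℂ] H} (hV : ∀ x, T x = V (modulus T x)) : Function.Commute V (modulus T) := by
  refine congrFun ((denseRange_modulus hinj).equalizer (by fun_prop) (by fun_prop) ?_)
  funext x
  have hcomm : T (modulus T x) = modulus T (T x) := DFunLike.congr_fun hT x
  simpa only [Function.comp_apply, hV] using hcomm

end IsQuasinormal

end Modulus

section NormalExtensions

variable {𝕜 H K : Type*} [RCLike 𝕜] [NormedAddCommGroup H] [InnerProductSpace 𝕜 H]
  [NormedAddCommGroup K] [InnerProductSpace 𝕜 K] [CompleteSpace K]

/-- The operator `N` on `K` is normal and extends `T`, where `H` is regarded as a subspace of `K`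
through the isometry `ι`. -/
structure IsNormalExtension (ι : H →ₗᵢ[𝕜] K) (T : H →L[𝕜] H) (N : K →L[𝕜] K) : Prop where
  isStarNormal : IsStarNormal N
  apply_map : ∀ x, N (ι x) = ι (T x)

/-- A normal extension is minimal if no proper closed subspace of `K` that reduces `N` contains the
range of `ι`. -/
structure IsMinimalNormalExtension (ι : H →ₗᵢ[𝕜] K) (T : H →L[𝕜] H) (N : K →L[𝕜] K) : Prop
    extends IsNormalExtension ι T N where
  eq_top_of_reduces : ∀ M : Submodule 𝕜 K, IsClosed (M : Set K) → (∀ x ∈ M, N x ∈ M) →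
    (∀ x ∈ M, adjoint N x ∈ M) → Set.range ⇑ι ⊆ (M : Set K) → M = ⊤

/-- The linear map `(fₖ)ₖ ↦ ∑ₖ N*ᵏ J fₖ`. When `N` is a normal extension of an operator along `J`,
the closure of its range is the smallest closed subspace that reduces `N` and contains the range of
`J`. -/
noncomputable def adjointPowSum (N : K →L[𝕜] K) (J : H →L[𝕜] K) : (ℕ →₀ H) →ₗ[𝕜] K :=
  Finsupp.lsum 𝕜 fun k => (((adjoint N ^ k) ∘L J : H →L[𝕜] K) : H →ₗ[𝕜] K)

section AdjointPowSum

variable (N : K →L[𝕜] K) (J : H →L[𝕜] K)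

theorem adjointPowSum_apply (f : ℕ →₀ H) :
    adjointPowSum N J f = ∑ k ∈ f.support, (adjoint N ^ k) (J (f k)) :=
  rfl

theorem adjointPowSum_single (k : ℕ) (x : H) :
    adjointPowSum N J (Finsupp.single k x) = (adjoint N ^ k) (J x) := by
  rw [adjointPowSum, Finsupp.lsum_single]
  rfl

theorem adjoint_adjointPowSum (f : ℕ →₀ H) :
    adjoint N (adjointPowSum N J f) = adjointPowSum N J (f.mapDomain Nat.succ) := by
  induction f using Finsupp.induction_linear with
  | zero => simp
  | add f g hf hg => simp only [map_add, Finsupp.mapDomain_add, hf, hg]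
  | single k x =>
    rw [Finsupp.mapDomain_single, adjointPowSum_single, adjointPowSum_single, pow_succ']
    rfl

variable {N J}

theorem apply_adjointPowSum (hN : IsStarNormal N) {T : H →L[𝕜] H} (hT : ∀ x, N (J x) = J (T x))
    (f : ℕ →₀ H) :
    N (adjointPowSum N J f) = adjointPowSum N J (f.mapRange T (map_zero T)) := by
  induction f using Finsupp.induction_linear with
  | zero => simp
  | add f g hf hg => rw [map_add, map_add, hf, hg, Finsupp.mapRange_add (map_add T), map_add]
  | single k x =>
    have hcomm (z : K) : N ((adjoint N ^ k) z) = (adjoint N ^ k) (N z) :=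
      DFunLike.congr_fun (hN.star_comm_self.pow_left k).eq.symm z
    rw [Finsupp.mapRange_single, adjointPowSum_single, adjointPowSum_single, hcomm, hT]

end AdjointPowSum

theorem IsMinimalNormalExtension.denseRange_adjointPowSum {ι : H →ₗᵢ[𝕜] K} {T : H →L[𝕜] H}
    {N : K →L[𝕜] K} (h : IsMinimalNormalExtension ι T N) :
    DenseRange (adjointPowSum N ι.toContinuousLinearMap) := by
  set R := (adjointPowSum N ι.toContinuousLinearMap).range
  refine Submodule.dense_iff_topologicalClosure_eq_top.2 (h.eq_top_of_reduces R.topologicalClosure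
    R.isClosed_topologicalClosure (fun x hx => map_mem_closure N.continuous hx ?_)
    (fun x hx => map_mem_closure (adjoint N).continuous hx ?_) ?_)
  · rintro _ ⟨f, rfl⟩
    exact ⟨_, (apply_adjointPowSum h.isStarNormal h.apply_map f).symm⟩
  · rintro _ ⟨f, rfl⟩
    exact ⟨_, (adjoint_adjointPowSum N _ f).symm⟩
  · rintro _ ⟨x, rfl⟩
    exact R.le_topologicalClosure ⟨Finsupp.single 0 x, by simp [adjointPowSum_single]⟩

/-- By the Fuglede–Putnam theorem a lift of `X` must send `N*ᵏ ι x` to `N₁*ᵏ ι₁ X x`, and these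
vectors span a dense subspace; so the estimate is all there is to check. -/
theorem IsMinimalNormalExtension.exists_lift_of_norm_le {H₁ K₁ : Type*} [NormedAddCommGroup H₁]
    [InnerProductSpace 𝕜 H₁] [NormedAddCommGroup K₁] [InnerProductSpace 𝕜 K₁] [CompleteSpace K₁]
    {ι₁ : H₁ →ₗᵢ[𝕜] K₁} {T₁ : H₁ →L[𝕜] H₁} {N₁ : K₁ →L[𝕜] K₁}
    {ι : H →ₗᵢ[𝕜] K} {T : H →L[𝕜] H} {N : K →L[𝕜] K}
    (h : IsMinimalNormalExtension ι T N) (h₁ : IsNormalExtension ι₁ T₁ N₁) {X : H →L[𝕜] H₁}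
    (hX : T₁ ∘L X = X ∘L T) {C : ℝ}
    (hC : ∀ f, ‖adjointPowSum N₁ (ι₁.toContinuousLinearMap ∘L X) f‖ ≤
      C * ‖adjointPowSum N ι.toContinuousLinearMap f‖) :
    ∃ Xhat : K →L[𝕜] K₁, (∀ x, Xhat (ι x) = ι₁ (X x)) ∧ N₁ ∘L Xhat = Xhat ∘L N := by
  set S := adjointPowSum N ι.toContinuousLinearMap
  set S₁ := adjointPowSum N₁ (ι₁.toContinuousLinearMap ∘L X)
  have hdense : DenseRange S := h.denseRange_adjointPowSum
  have hlift (f : ℕ →₀ H) : S₁.extendOfNorm S (S f) = S₁ f :=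
    LinearMap.extendOfNorm_eq hdense ⟨C, hC⟩ f
  have hS (f : ℕ →₀ H) : N (S f) = S (f.mapRange T (map_zero T)) :=
    apply_adjointPowSum h.isStarNormal h.apply_map f
  have hS₁ (f : ℕ →₀ H) : N₁ (S₁ f) = S₁ (f.mapRange T (map_zero T)) :=
    apply_adjointPowSum h₁.isStarNormal
      (fun x => (h₁.apply_map _).trans (congrArg ι₁ (DFunLike.congr_fun hX x))) f
  refine ⟨S₁.extendOfNorm S, fun x => ?_, DFunLike.coe_injective
    (hdense.equalizer (by fun_prop) (by fun_prop) (funext fun f => ?_))⟩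
  · simpa [S, S₁, adjointPowSum_single] using hlift (Finsupp.single 0 x)
  · simp only [Function.comp_apply, comp_apply, hlift, hS, hS₁]

theorem IsNormalExtension.adjoint_apply_apply_eq [CompleteSpace H] {ι : H →ₗᵢ[𝕜] K}
    {T : H →L[𝕜] H} {N : K →L[𝕜] K} (h : IsNormalExtension ι T N) {x z : H}
    (hz : adjoint N (N (ι x)) = ι z) : adjoint T (T x) = z := by
  refine ext_inner_right 𝕜 fun y => ?_
  rw [← ι.inner_map_map z y, ← hz, adjoint_inner_left, adjoint_inner_left, h.apply_map,
    h.apply_map, ι.inner_map_map]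

theorem IsNormalExtension.inner_adjoint_pow_apply {ι : H →ₗᵢ[𝕜] K} {T : H →L[𝕜] H}
    {N : K →L[𝕜] K} (h : IsNormalExtension ι T N) (k l : ℕ) (x y : H) :
    inner 𝕜 ((adjoint N ^ k) (ι x)) ((adjoint N ^ l) (ι y)) = inner 𝕜 (T^[l] x) (T^[k] y) := by
  have hstar (m : ℕ) : adjoint N ^ m = adjoint (N ^ m) := (star_pow N m).symm
  have hcomm (z : K) : (N ^ l) ((adjoint N ^ k) z) = (adjoint N ^ k) ((N ^ l) z) :=
    DFunLike.congr_fun (h.isStarNormal.star_comm_self.pow_pow k l).eq.symm z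
  have hpow (m : ℕ) (z : H) : (N ^ m) (ι z) = ι (T^[m] z) := by
    have hsemi : Function.Semiconj ι T N := fun z => (h.apply_map z).symm
    rw [FunLike.coe_pow_eq_iterate, hsemi.iterate_right m z]
  rw [hstar l, adjoint_inner_right, hcomm, hstar k, adjoint_inner_left, hpow, hpow,
    ι.inner_map_map]

end NormalExtensions

section PowersOfIsometryTimesSymmetric

variable {𝕜 H : Type*} [RCLike 𝕜] [NormedAddCommGroup H] [InnerProductSpace 𝕜 H]

theorem inner_iterate_isometry_eq (V : H →ₗᵢ[𝕜] H) {a b c d : ℕ} (habcd : a + d = b + c)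
    (x y : H) : inner 𝕜 (V^[a] x) (V^[b] y) = inner 𝕜 (V^[c] x) (V^[d] y) := by
  wlog hac : a ≤ c generalizing a b c d
  · exact (this (by omega) (by omega)).symm
  obtain ⟨m, rfl⟩ := Nat.exists_eq_add_of_le' hac
  obtain rfl : d = m + b := by omega
  rw [Function.iterate_add_apply, Function.iterate_add_apply, ← LinearIsometry.coe_pow,
    ← LinearIsometry.coe_pow, ← LinearIsometry.coe_pow, LinearIsometry.inner_map_map]

theorem inner_iterate_comm_of_isSymmetric {A : H →ₗ[𝕜] H} (hA : A.IsSymmetric) (k l : ℕ)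
    (x y : H) : inner 𝕜 (A^[l] x) (A^[k] y) = inner 𝕜 (A^[k] x) (A^[l] y) := by
  simp only [← Module.End.pow_apply]
  rw [hA.pow l, ← Module.End.mul_apply, ← pow_add, add_comm, pow_add, Module.End.mul_apply,
    ← hA.pow k]

/-- The gain is that on the right-hand side the first argument depends on `k` alone and the second
on `l` alone, so that summing over `k` and `l` gives the square of a norm. -/
theorem inner_iterate_apply_eq {E : Type*} {T : H → H} {V : H →ₗᵢ[𝕜] H} {A : H →ₗ[𝕜] H}
    (hT : ∀ x, T x = V (A x)) (hA : A.IsSymmetric) {X : E → H} {W B : E → E}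
    (hW : Function.Semiconj X W V) (hB : Function.Semiconj X B A) (hWB : Function.Commute W B)
    {k l n : ℕ} (hk : k ≤ n) (hl : l ≤ n) (x y : E) :
    inner 𝕜 (T^[l] (X x)) (T^[k] (X y)) =
      inner 𝕜 (X (W^[n - k] (B^[k] x))) (X (W^[n - l] (B^[l] y))) := by
  have hTpow (m : ℕ) (z : E) : T^[m] (X z) = V^[m] (X (B^[m] z)) := by
    have hsemi : Function.Semiconj X (W ∘ B) T := fun z => by
      rw [hT, ← hB, ← hW, Function.comp_apply]
    rw [← hsemi.iterate_right m, hWB.comp_iterate, Function.comp_apply, hW.iterate_right m]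
  have hVA (i m : ℕ) (z : E) : V^[i] (X (B^[m] z)) = A^[m] (X (W^[i] z)) := by
    rw [← hW.iterate_right i, ← hB.iterate_right m, hWB.iterate_iterate i m]
  have hXA (i m : ℕ) (z : E) : X (W^[i] (B^[m] z)) = A^[m] (X (W^[i] z)) := by
    rw [hWB.iterate_iterate i m, hB.iterate_right m]
  calc
    inner 𝕜 (T^[l] (X x)) (T^[k] (X y))
      = inner 𝕜 (V^[l] (X (B^[l] x))) (V^[k] (X (B^[k] y))) := by rw [hTpow, hTpow]
    _ = inner 𝕜 (V^[n - k] (X (B^[l] x))) (V^[n - l] (X (B^[k] y))) :=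
      inner_iterate_isometry_eq V (by omega) _ _
    _ = inner 𝕜 (A^[l] (X (W^[n - k] x))) (A^[k] (X (W^[n - l] y))) := by rw [hVA, hVA]
    _ = inner 𝕜 (A^[k] (X (W^[n - k] x))) (A^[l] (X (W^[n - l] y))) :=
      inner_iterate_comm_of_isSymmetric hA k l _ _
    _ = inner 𝕜 (X (W^[n - k] (B^[k] x))) (X (W^[n - l] (B^[l] y))) := by rw [hXA, hXA]

theorem IsNormalExtension.norm_adjointPowSum_eq {E K : Type*} [NormedAddCommGroup E]
    [InnerProductSpace 𝕜 E] [NormedAddCommGroup K] [InnerProductSpace 𝕜 K] [CompleteSpace K]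
    {ι : H →ₗᵢ[𝕜] K} {T : H →L[𝕜] H} {N : K →L[𝕜] K} (h : IsNormalExtension ι T N)
    {V : H →ₗᵢ[𝕜] H} {A : H →ₗ[𝕜] H} (hT : ∀ x, T x = V (A x)) (hA : A.IsSymmetric)
    {X : E →L[𝕜] H} {W B : E → E} (hW : Function.Semiconj X W V) (hB : Function.Semiconj X B A)
    (hWB : Function.Commute W B) (f : ℕ →₀ E) {n : ℕ} (hn : ∀ k ∈ f.support, k ≤ n) :
    ‖adjointPowSum N (ι.toContinuousLinearMap ∘L X) f‖ =
      ‖X (∑ k ∈ f.support, W^[n - k] (B^[k] (f k)))‖ := by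
  rw [norm_eq_sqrt_re_inner (𝕜 := 𝕜), norm_eq_sqrt_re_inner (𝕜 := 𝕜), adjointPowSum_apply,
    map_sum, sum_inner, sum_inner]
  refine congrArg (fun c => √(RCLike.re c)) (Finset.sum_congr rfl fun k hk => ?_)
  rw [inner_sum, inner_sum]
  refine Finset.sum_congr rfl fun l hl => ?_
  exact (h.inner_adjoint_pow_apply k l _ _).trans
    (inner_iterate_apply_eq hT hA hW hB hWB (hn k hk) (hn l hl) _ _)

end PowersOfIsometryTimesSymmetric

section QuasinormalOperators

variable {H₁ H₂ K₁ K₂ : Type*}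
  [NormedAddCommGroup H₁] [InnerProductSpace ℂ H₁] [CompleteSpace H₁]
  [NormedAddCommGroup H₂] [InnerProductSpace ℂ H₂] [CompleteSpace H₂]
  [NormedAddCommGroup K₁] [InnerProductSpace ℂ K₁] [CompleteSpace K₁]
  [NormedAddCommGroup K₂] [InnerProductSpace ℂ K₂] [CompleteSpace K₂]
  {T₁ : H₁ →L[ℂ] H₁} {T₂ : H₂ →L[ℂ] H₂} {V₁ : H₁ →ₗᵢ[ℂ] H₁} {V₂ : H₂ →ₗᵢ[ℂ] H₂}
  {ι₁ : H₁ →ₗᵢ[ℂ] K₁} {ι₂ : H₂ →ₗᵢ[ℂ] K₂} {N₁ : K₁ →L[ℂ] K₁} {N₂ : K₂ →L[ℂ] K₂}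
  {X : H₂ →L[ℂ] H₁}

theorem IsQuasinormal.adjoint_apply_apply_map (hT : IsQuasinormal T₁)
    (h : IsNormalExtension ι₁ T₁ N₁) (x : H₁) :
    adjoint N₁ (N₁ (ι₁ x)) = ι₁ (adjoint T₁ (T₁ x)) := by
  refine eq_of_norm_le_re_inner_eq_norm_sq (𝕜 := ℂ) (le_of_eq ?_) ?_
  · rw [← isStarNormal_iff_norm_eq_adjoint.1 h.isStarNormal, h.apply_map, h.apply_map,
      ι₁.norm_map, ι₁.norm_map, hT.norm_adjoint_apply_apply]
  · rw [adjoint_inner_left, h.apply_map, h.apply_map, ι₁.inner_map_map, ι₁.norm_map,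
      ← adjoint_inner_left, inner_self_eq_norm_sq]

theorem IsQuasinormal.modulus_comp_eq_of_lift (hT₂ : IsQuasinormal T₂)
    (h₁ : IsNormalExtension ι₁ T₁ N₁) (h₂ : IsNormalExtension ι₂ T₂ N₂) {Xhat : K₂ →L[ℂ] K₁}
    (hlift : ∀ x, Xhat (ι₂ x) = ι₁ (X x)) (hN : N₁ ∘L Xhat = Xhat ∘L N₂) :
    modulus T₁ ∘L X = X ∘L modulus T₂ := by
  have hNapply (z : K₂) : N₁ (Xhat z) = Xhat (N₂ z) := DFunLike.congr_fun hN z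
  have hNstar (z : K₂) : adjoint N₁ (Xhat z) = Xhat (adjoint N₂ z) :=
    DFunLike.congr_fun (adjoint_comp_eq_comp_adjoint h₁.isStarNormal h₂.isStarNormal hN) z
  refine modulus_comp_eq_comp_modulus (ContinuousLinearMap.ext fun x =>
    h₁.adjoint_apply_apply_eq ?_)
  calc
    adjoint N₁ (N₁ (ι₁ (X x))) = Xhat (adjoint N₂ (N₂ (ι₂ x))) := by
      rw [← hlift, hNapply, hNstar]
    _ = Xhat (ι₂ (adjoint T₂ (T₂ x))) := by rw [hT₂.adjoint_apply_apply_map h₂]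
    _ = ι₁ (X (adjoint T₂ (T₂ x))) := hlift _

theorem isometry_apply_comm (hinj : Function.Injective T₂) (hV₁ : ∀ x, T₁ x = V₁ (modulus T₁ x))
    (hV₂ : ∀ x, T₂ x = V₂ (modulus T₂ x)) (hX : ∀ x, T₁ (X x) = X (T₂ x))
    (hmod : modulus T₁ ∘L X = X ∘L modulus T₂) (x : H₂) : V₁ (X x) = X (V₂ x) := by
  refine congrFun ((denseRange_modulus hinj).equalizer (g := fun y => V₁ (X y))
    (h := fun y => X (V₂ y)) (by fun_prop) (by fun_prop) (funext fun y => ?_)) x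
  calc
    V₁ (X (modulus T₂ y)) = V₁ (modulus T₁ (X y)) :=
      congrArg V₁ (DFunLike.congr_fun hmod y).symm
    _ = T₁ (X y) := (hV₁ _).symm
    _ = X (T₂ y) := hX y
    _ = X (V₂ (modulus T₂ y)) := by rw [hV₂]

theorem norm_adjointPowSum_comp_le (hinj : Function.Injective T₂) (hT₂ : IsQuasinormal T₂)
    (hV₁ : ∀ x, T₁ x = V₁ (modulus T₁ x)) (hV₂ : ∀ x, T₂ x = V₂ (modulus T₂ x))
    (h₁ : IsNormalExtension ι₁ T₁ N₁) (h₂ : IsNormalExtension ι₂ T₂ N₂)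
    (hX : ∀ x, V₁ (X x) = X (V₂ x)) (hmod : modulus T₁ ∘L X = X ∘L modulus T₂) (f : ℕ →₀ H₂) :
    ‖adjointPowSum N₁ (ι₁.toContinuousLinearMap ∘L X) f‖ ≤
      ‖X‖ * ‖adjointPowSum N₂ ι₂.toContinuousLinearMap f‖ := by
  obtain ⟨n, hn⟩ : ∃ n, ∀ k ∈ f.support, k ≤ n := f.support.bddAbove
  have hcomm := hT₂.commute_isometry_modulus hinj hV₂
  have hnorm₁ := h₁.norm_adjointPowSum_eq hV₁ (isSelfAdjoint_modulus T₁).isSymmetric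
    (fun x => (hX x).symm) (fun x => (DFunLike.congr_fun hmod x).symm) hcomm f hn
  have hnorm₂ := h₂.norm_adjointPowSum_eq (X := .id ℂ H₂) hV₂
    (isSelfAdjoint_modulus T₂).isSymmetric (fun _ => rfl) (fun _ => rfl) hcomm f hn
  rw [comp_id] at hnorm₂
  rw [hnorm₁, hnorm₂]
  exact X.le_opNorm _

theorem lifting_intertwiner_iff_general (hT₂inj : Function.Injective T₂)
    (hT₂qn : IsQuasinormal T₂) (hV₁ : ∀ x, T₁ x = V₁ (modulus T₁ x))
    (hV₂ : ∀ x, T₂ x = V₂ (modulus T₂ x)) (h₁ : IsNormalExtension ι₁ T₁ N₁)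
    (h₂ : IsMinimalNormalExtension ι₂ T₂ N₂) :
    (∃ Xhat : K₂ →L[ℂ] K₁, (∀ x, Xhat (ι₂ x) = ι₁ (X x)) ∧ N₁ ∘L Xhat = Xhat ∘L N₂) ↔
      ((∀ x, V₁ (X x) = X (V₂ x)) ∧ modulus T₁ ∘L X = X ∘L modulus T₂) := by
  constructor
  · rintro ⟨Xhat, hlift, hN⟩
    have hmod := hT₂qn.modulus_comp_eq_of_lift h₁ h₂.toIsNormalExtension hlift hN
    have hTX (x : H₂) : T₁ (X x) = X (T₂ x) := ι₁.injective <| by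
      rw [← h₁.apply_map, ← hlift, ← hlift, ← h₂.apply_map]
      exact DFunLike.congr_fun hN (ι₂ x)
    exact ⟨isometry_apply_comm hT₂inj hV₁ hV₂ hTX hmod, hmod⟩
  · rintro ⟨hVX, hmod⟩
    have hTX : T₁ ∘L X = X ∘L T₂ := ContinuousLinearMap.ext fun x => calc
      T₁ (X x) = V₁ (X (modulus T₂ x)) :=
        (hV₁ _).trans (congrArg V₁ (DFunLike.congr_fun hmod x))
      _ = X (T₂ x) := by rw [hVX, hV₂]
    exact h₂.exists_lift_of_norm_le h₁ hTX (norm_adjointPowSum_comp_le hT₂inj hT₂qn hV₁ hV₂ h₁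
      h₂.toIsNormalExtension hVX hmod)

end QuasinormalOperators

theorem lifting_intertwiner_iff
    {H₁ H₂ K₁ K₂ : Type*} [NormedAddCommGroup H₁] [InnerProductSpace ℂ H₁] [CompleteSpace H₁] [NormedAddCommGroup H₂] [InnerProductSpace ℂ H₂] [CompleteSpace H₂]
    [NormedAddCommGroup K₁] [InnerProductSpace ℂ K₁] [CompleteSpace K₁] [NormedAddCommGroup K₂] [InnerProductSpace ℂ K₂] [CompleteSpace K₂]
    (T₁ : H₁ →L[ℂ] H₁) (T₂ : H₂ →L[ℂ] H₂)
    (hT₁inj : Function.Injective T₁) (hT₂inj : Function.Injective T₂)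
    (hT₁qn : IsQuasinormal T₁) (hT₂qn : IsQuasinormal T₂)
    (V₁ : H₁ →ₗᵢ[ℂ] H₁) (V₂ : H₂ →ₗᵢ[ℂ] H₂)
    (hV₁ : ∀ x, T₁ x = V₁ (modulus T₁ x)) (hV₂ : ∀ x, T₂ x = V₂ (modulus T₂ x))
    (ι₁ : H₁ →ₗᵢ[ℂ] K₁) (ι₂ : H₂ →ₗᵢ[ℂ] K₂)
    (N₁ : K₁ →L[ℂ] K₁) (N₂ : K₂ →L[ℂ] K₂)
    (hN₁ : adjoint N₁ ∘L N₁ = N₁ ∘L adjoint N₁)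
    (hN₂ : adjoint N₂ ∘L N₂ = N₂ ∘L adjoint N₂)
    (hext₁ : ∀ x, N₁ (ι₁ x) = ι₁ (T₁ x)) (hext₂ : ∀ x, N₂ (ι₂ x) = ι₂ (T₂ x))
    (hmin₁ : ∀ M : Submodule ℂ K₁, IsClosed (M : Set K₁) → (∀ x ∈ M, N₁ x ∈ M) →
      (∀ x ∈ M, adjoint N₁ x ∈ M) → Set.range ⇑ι₁ ⊆ (M : Set K₁) → M = ⊤)
    (hmin₂ : ∀ M : Submodule ℂ K₂, IsClosed (M : Set K₂) → (∀ x ∈ M, N₂ x ∈ M) →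
      (∀ x ∈ M, adjoint N₂ x ∈ M) → Set.range ⇑ι₂ ⊆ (M : Set K₂) → M = ⊤)
    (X : H₂ →L[ℂ] H₁) :
    (∃ Xhat : K₂ →L[ℂ] K₁, (∀ x, Xhat (ι₂ x) = ι₁ (X x)) ∧ N₁ ∘L Xhat = Xhat ∘L N₂) ↔
      ((∀ x, V₁ (X x) = X (V₂ x)) ∧ modulus T₁ ∘L X = X ∘L modulus T₂) :=
  lifting_intertwiner_iff_general hT₂inj hT₂qn hV₁ hV₂ ⟨⟨hN₁⟩, hext₁⟩
    ⟨⟨⟨hN₂⟩, hext₂⟩, hmin₂⟩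
end
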